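/- Let p ≥ 2 and n ≥ 1, and let U_p be defined by U_p(x,y) = p(1−1/p)^{p−1}·(|y| − (p−1)|x|)·(|x|+|y|)^{p−1} if |y| ≥ (p−1)|x|, and U_p(x,y) = |y|^p − (p−1)^p|x|^p if |y| < (p−1)|x|. Then for every fixed x ∈ ℝⁿ, the value U_p(x,y) depends on y only through |y| and is nondecreasing in |y|; that is, for all y₁, y₂ ∈ ℝⁿ with |y₁| ≤ |y₂| one has U_p(x,y₁) ≤ U_p(x,y₂). -/

import Mathlib

/-!
Both branches are nondecreasing in `‖y‖`: for `‖y‖ ≥ (p - 1) ‖x‖` the value is a product of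
nonnegative nondecreasing factors, and below that threshold it is `‖y‖ ^ p` minus a constant.
The threshold `‖y‖ = (p - 1) ‖x‖` separates nonpositive values (below) from nonnegative ones
(above), so monotonicity persists when `‖y₁‖` and `‖y₂‖` lie on different sides of it.
-/

open Real

/-- The modified Burkholder special function for `p ≥ 2`. -/
noncomputable def burkholderU (p : ℝ) {n : ℕ} (x y : EuclideanSpace ℝ (Fin n)) : ℝ :=
  if (p - 1) * ‖x‖ ≤ ‖y‖ then
    p * (1 - 1 / p) ^ (p - 1) * (‖y‖ - (p - 1) * ‖x‖) * (‖x‖ + ‖y‖) ^ (p - 1)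
  else
    ‖y‖ ^ p - (p - 1) ^ p * ‖x‖ ^ p

/-- For fixed `x`, the value `U_p(x,y)` depends on `y` only through `|y|` and is
nondecreasing in `|y|`: if `|y₁| ≤ |y₂|` then `U_p(x,y₁) ≤ U_p(x,y₂)`. -/
theorem stmt_3 (p : ℝ) (hp : 2 ≤ p) (n : ℕ) (hn : 1 ≤ n)
    (x y₁ y₂ : EuclideanSpace ℝ (Fin n)) (h : ‖y₁‖ ≤ ‖y₂‖) :
    burkholderU p x y₁ ≤ burkholderU p x y₂ := by
  have hp1 : 0 ≤ p - 1 := by linarith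
  have hc : 0 ≤ p * (1 - 1 / p) ^ (p - 1) := by
    have : 1 / p ≤ 1 := by rw [div_le_one (by linarith)]; linarith
    exact mul_nonneg (by linarith) (rpow_nonneg (by linarith) _)
  have hx := norm_nonneg x
  have hy₁ := norm_nonneg y₁
  have hy₂ := norm_nonneg y₂
  unfold burkholderU
  split_ifs with h₁ h₂ h₂
  · have hpow : (‖x‖ + ‖y₁‖) ^ (p - 1) ≤ (‖x‖ + ‖y₂‖) ^ (p - 1) :=
      rpow_le_rpow (by positivity) (by linarith) hp1
    exact mul_le_mul (mul_le_mul_of_nonneg_left (by linarith) hc) hpow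
      (by positivity) (mul_nonneg hc (by linarith))
  · exact absurd (h₁.trans h) h₂
  · have hlow : ‖y₁‖ ^ p ≤ (p - 1) ^ p * ‖x‖ ^ p := by
      rw [← mul_rpow hp1 hx]
      exact rpow_le_rpow hy₁ (not_le.mp h₁).le (by linarith)
    have hup : 0 ≤ p * (1 - 1 / p) ^ (p - 1) * (‖y₂‖ - (p - 1) * ‖x‖) *
        (‖x‖ + ‖y₂‖) ^ (p - 1) :=
      mul_nonneg (mul_nonneg hc (by linarith)) (by positivity)
    linarith
  · have hpow : ‖y₁‖ ^ p ≤ ‖y₂‖ ^ p := rpow_le_rpow hy₁ h (by linarith)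
    linarith
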